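/- The restricted operator Q = P|_{V₂}, with domain Dom P ∩ V₂, is a densely defined, closed, self-adjoint operator on the Hilbert space V₂, and Q has closed range. -/

import Mathlib

open scoped LinearPMap

/-- `T'` is the restriction of the partially defined operator `T` to the subspaces `V` (source)
and `W` (target): the domain of `T'` consists exactly of the elements of `V` lying in the domain
of `T`, and the values of `T'` agree with those of `T` (in particular `T` maps `Dom T ∩ V`
into `W`). -/
def IsRestrictionOf {R E : Type*} [Ring R] [AddCommGroup E] [Module R E]
    (T : E →ₗ.[R] E) (V W : Submodule R E) (T' : ↥V →ₗ.[R] ↥W) : Prop :=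
  (∀ u : V, u ∈ T'.domain ↔ (u : E) ∈ T.domain) ∧
  ∀ (u : V) (hu : u ∈ T'.domain) (hu' : (u : E) ∈ T.domain),
    ((T' ⟨u, hu⟩ : W) : E) = T ⟨(u : E), hu'⟩

/-!
The restrictions of `T` form a complex `V₁ → V₂ → V₃` of closed, densely defined operators `A`, `B`
with closed range, and `Q` is its Laplacian `B†B + AA†`. On `(ker B)ᗮ` the operator `B` has a
bounded inverse `L : ran B → (ker B)ᗮ` (closed graph theorem), and `L L*` inverts `B†B`; hence
`(ker B)ᗮ ⊆ ran Q`, and likewise `ran A ⊆ ran Q`. Since moreover `ker B ∩ (ran A)ᗮ ⊆ ker Q`,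
the range and the kernel of the symmetric operator `Q` together span `V₂`. Such an operator has no
proper symmetric extension: if `⟪y, Q v⟫ = ⟪x, v⟫` for all `v`, then `x ⟂ ker Q`, so `x = Q u`, and
then `y - u ⟂ ran Q`, so `y - u ∈ ker Q` and `Q y = x`.
-/

section Graph

variable {R E F G : Type*} [Ring R] [AddCommGroup E] [AddCommGroup F] [AddCommGroup G]
  [Module R E] [Module R F] [Module R G]

/-- The composition `g ∘ f` of partially defined operators on its natural domain
`{x ∈ Dom f | f x ∈ Dom g}`. -/
def pmapComp (g : F →ₗ.[R] G) (f : E →ₗ.[R] F) : E →ₗ.[R] G :=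
  g.comp (f.domRestrict ((g.domain.comap f.toFun).map f.domain.subtype)) <| by
    rintro ⟨_, ⟨x, hx, rfl⟩, _⟩
    exact hx

/-- The kernel of a partially defined operator, as a submodule of the ambient space (whereas
`LinearMap.ker f.toFun` is a submodule of the domain of `f`). -/
def pmapKernel (f : E →ₗ.[R] F) : Submodule R E :=
  f.graph.comap (LinearMap.inl R E F)

theorem mem_pmapKernel {f : E →ₗ.[R] F} {x : E} : x ∈ pmapKernel f ↔ (x, 0) ∈ f.graph :=
  Iff.rfl

theorem mem_range_toFun_iff_exists_mem_graph {f : E →ₗ.[R] F} {y : F} :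
    y ∈ LinearMap.range f.toFun ↔ ∃ x, (x, y) ∈ f.graph := by
  simp [← f.graph_map_snd_eq_range]

theorem sub_mem_pmapKernel {f : E →ₗ.[R] F} {x x' : E} {y : F} (hx : (x, y) ∈ f.graph)
    (hx' : (x', y) ∈ f.graph) : x - x' ∈ pmapKernel f := by
  simpa [mem_pmapKernel] using sub_mem hx hx'

theorem mem_graph_domRestrict {f : E →ₗ.[R] F} {K : Submodule R E} {x : E} {y : F} :
    (x, y) ∈ (f.domRestrict K).graph ↔ (x, y) ∈ f.graph ∧ x ∈ K := by
  simp only [LinearPMap.mem_graph_iff]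
  constructor
  · rintro ⟨⟨x, hxK, hx⟩, rfl, rfl⟩
    exact ⟨⟨⟨x, hx⟩, rfl, rfl⟩, hxK⟩
  · rintro ⟨⟨x, rfl, rfl⟩, hxK⟩
    exact ⟨⟨x, hxK, x.2⟩, rfl, rfl⟩

theorem mem_graph_pmapComp {g : F →ₗ.[R] G} {f : E →ₗ.[R] F} {x : E} {z : G} :
    (x, z) ∈ (pmapComp g f).graph ↔ ∃ y, (x, y) ∈ f.graph ∧ (y, z) ∈ g.graph := by
  simp only [LinearPMap.mem_graph_iff]
  constructor
  · rintro ⟨⟨_, ⟨x, hx, rfl⟩, _⟩, rfl, rfl⟩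
    exact ⟨f x, ⟨x, rfl, rfl⟩, ⟨f x, hx⟩, rfl, rfl⟩
  · rintro ⟨_, ⟨x, rfl, rfl⟩, ⟨y, hy⟩, rfl, rfl⟩
    exact ⟨⟨x, ⟨x, hy, rfl⟩, x.2⟩, rfl, rfl⟩

theorem mem_graph_add {f g : E →ₗ.[R] F} {x : E} {z : F} :
    (x, z) ∈ (f + g).graph ↔ ∃ y y', (x, y) ∈ f.graph ∧ (x, y') ∈ g.graph ∧ y + y' = z := by
  simp only [LinearPMap.mem_graph_iff]
  constructor
  · rintro ⟨⟨x, hf, hg⟩, rfl, rfl⟩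
    exact ⟨_, _, ⟨⟨x, hf⟩, rfl, rfl⟩, ⟨⟨x, hg⟩, rfl, rfl⟩, rfl⟩
  · rintro ⟨_, _, ⟨⟨x, hf⟩, rfl, rfl⟩, ⟨⟨x', hg⟩, hx, rfl⟩, rfl⟩
    obtain rfl : x' = x := hx
    exact ⟨⟨x', hf, hg⟩, rfl, rfl⟩

theorem eq_pmapComp_add_pmapComp {B : F →ₗ.[R] G} {B' : G →ₗ.[R] F} {A : E →ₗ.[R] F}
    {A' : F →ₗ.[R] E} {P : F →ₗ.[R] F}
    (mem_domain : ∀ x, x ∈ P.domain ↔ ∃ (h₁ : x ∈ B.domain) (h₂ : x ∈ A'.domain),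
      B ⟨x, h₁⟩ ∈ B'.domain ∧ A' ⟨x, h₂⟩ ∈ A.domain)
    (apply_eq : ∀ x (hx : x ∈ P.domain) (h₁ : x ∈ B.domain) (h₂ : x ∈ A'.domain)
      (h₃ : B ⟨x, h₁⟩ ∈ B'.domain) (h₄ : A' ⟨x, h₂⟩ ∈ A.domain),
      P ⟨x, hx⟩ = B' ⟨B ⟨x, h₁⟩, h₃⟩ + A ⟨A' ⟨x, h₂⟩, h₄⟩) :
    P = pmapComp B' B + pmapComp A A' := by
  refine LinearPMap.eq_of_eq_graph (Submodule.ext fun ⟨x, z⟩ => ?_)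
  simp only [mem_graph_add, mem_graph_pmapComp]
  simp only [LinearPMap.mem_graph_iff]
  constructor
  · rintro ⟨⟨x, hx⟩, rfl, rfl⟩
    obtain ⟨h₁, h₂, h₃, h₄⟩ := (mem_domain x).1 hx
    exact ⟨_, _, ⟨_, ⟨⟨x, h₁⟩, rfl, rfl⟩, ⟨_, h₃⟩, rfl, rfl⟩,
      ⟨_, ⟨⟨x, h₂⟩, rfl, rfl⟩, ⟨_, h₄⟩, rfl, rfl⟩, (apply_eq x hx h₁ h₂ h₃ h₄).symm⟩
  · rintro ⟨_, _, ⟨_, ⟨⟨x, h₁⟩, rfl, rfl⟩, ⟨_, h₃⟩, rfl, rfl⟩,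
      ⟨_, ⟨⟨x', h₂⟩, hx, rfl⟩, ⟨_, h₄⟩, rfl, rfl⟩, rfl⟩
    obtain rfl : x' = x := hx
    have hx' := (mem_domain x').2 ⟨h₁, h₂, h₃, h₄⟩
    exact ⟨⟨x', hx'⟩, rfl, apply_eq x' hx' h₁ h₂ h₃ h₄⟩

end Graph

section Restriction

variable {R E : Type*} [Ring R] [AddCommGroup E] [Module R E] {V W U : Submodule R E}

theorem isRestrictionOf_iff_mem_graph {T : E →ₗ.[R] E} {T' : V →ₗ.[R] W} :
    IsRestrictionOf T V W T' ↔
      ∀ (u : V) (y : E), ((u : E), y) ∈ T.graph ↔ ∃ v : W, (u, v) ∈ T'.graph ∧ (v : E) = y := by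
  simp only [LinearPMap.mem_graph_iff]
  constructor
  · rintro ⟨mem_domain, apply_eq⟩ u y
    constructor
    · rintro ⟨⟨_, hu⟩, rfl, rfl⟩
      have hu' := (mem_domain u).2 hu
      exact ⟨_, ⟨⟨u, hu'⟩, rfl, rfl⟩, apply_eq u hu' hu⟩
    · rintro ⟨_, ⟨⟨u, hu'⟩, rfl, rfl⟩, rfl⟩
      have hu := (mem_domain u).1 hu'
      exact ⟨⟨u, hu⟩, rfl, (apply_eq u hu' hu).symm⟩
  · intro h
    refine ⟨fun u => ⟨fun hu' => ?_, fun hu => ?_⟩, fun u hu' hu => ?_⟩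
    · obtain ⟨x, hx, -⟩ := (h u (T' ⟨u, hu'⟩)).2 ⟨_, ⟨⟨u, hu'⟩, rfl, rfl⟩, rfl⟩
      exact hx ▸ x.2
    · obtain ⟨_, ⟨x, rfl, -⟩, -⟩ := (h u (T ⟨u, hu⟩)).1 ⟨⟨u, hu⟩, rfl, rfl⟩
      exact x.2
    · obtain ⟨_, ⟨x, rfl, rfl⟩, hx⟩ := (h u (T ⟨u, hu⟩)).1 ⟨⟨u, hu⟩, rfl, rfl⟩
      exact hx

namespace IsRestrictionOf

variable {S T : E →ₗ.[R] E} {T' : V →ₗ.[R] W}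

theorem mem_graph_iff (hT : IsRestrictionOf T V W T') {u : V} {v : W} :
    (u, v) ∈ T'.graph ↔ ((u : E), (v : E)) ∈ T.graph := by
  simp [-LinearPMap.mem_graph_iff, isRestrictionOf_iff_mem_graph.1 hT u v]

theorem unique {T'' : V →ₗ.[R] W} (hT' : IsRestrictionOf T V W T')
    (hT'' : IsRestrictionOf T V W T'') : T' = T'' :=
  LinearPMap.eq_of_eq_graph <| Submodule.ext fun _ =>
    hT'.mem_graph_iff.trans hT''.mem_graph_iff.symm

protected theorem pmapComp {S' : W →ₗ.[R] U} (hS : IsRestrictionOf S W U S')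
    (hT : IsRestrictionOf T V W T') : IsRestrictionOf (pmapComp S T) V U (pmapComp S' T') := by
  rw [isRestrictionOf_iff_mem_graph] at *
  intro u z
  simp only [mem_graph_pmapComp]
  constructor
  · rintro ⟨_, huv, hvw⟩
    obtain ⟨v, huv', rfl⟩ := (hT u _).1 huv
    obtain ⟨w, hvw', rfl⟩ := (hS v _).1 hvw
    exact ⟨w, ⟨v, huv', hvw'⟩, rfl⟩
  · rintro ⟨w, ⟨v, huv, hvw⟩, rfl⟩
    exact ⟨v, (hT u v).2 ⟨v, huv, rfl⟩, (hS v w).2 ⟨w, hvw, rfl⟩⟩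

protected theorem add {S' : V →ₗ.[R] W} (hS : IsRestrictionOf S V W S')
    (hT : IsRestrictionOf T V W T') : IsRestrictionOf (S + T) V W (S' + T') := by
  rw [isRestrictionOf_iff_mem_graph] at *
  intro u z
  simp only [mem_graph_add]
  constructor
  · rintro ⟨_, _, huv, huw, rfl⟩
    obtain ⟨v, huv', rfl⟩ := (hS u _).1 huv
    obtain ⟨w, huw', rfl⟩ := (hT u _).1 huw
    exact ⟨v + w, ⟨v, w, huv', huw', rfl⟩, rfl⟩
  · rintro ⟨_, ⟨v, w, huv, huw, rfl⟩, rfl⟩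
    exact ⟨v, w, (hS u v).2 ⟨v, huv, rfl⟩, (hT u w).2 ⟨w, huw, rfl⟩, rfl⟩

theorem range_le_pmapKernel {S' : W →ₗ.[R] U} (hS : IsRestrictionOf S W U S')
    (hT : IsRestrictionOf T V W T') (h : LinearMap.range T.toFun ≤ pmapKernel S) :
    LinearMap.range T'.toFun ≤ pmapKernel S' := by
  intro v hv
  obtain ⟨u, huv⟩ := mem_range_toFun_iff_exists_mem_graph.1 hv
  exact hS.mem_graph_iff.2 (h (mem_range_toFun_iff_exists_mem_graph.2 ⟨u, hT.mem_graph_iff.1 huv⟩))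

end IsRestrictionOf

end Restriction

section ClosedOperator

theorem isClosed_pmapKernel {R E F : Type*} [CommRing R] [AddCommGroup E] [AddCommGroup F]
    [Module R E] [Module R F] [TopologicalSpace E] [TopologicalSpace F]
    {f : E →ₗ.[R] F} (hf : f.IsClosed) : IsClosed (pmapKernel f : Set E) :=
  hf.preimage (f := fun x : E => (x, (0 : F))) (by fun_prop)

theorem IsRestrictionOf.isClosed {R E : Type*} [CommRing R] [AddCommGroup E] [Module R E]
    [TopologicalSpace E] {V W : Submodule R E} {T : E →ₗ.[R] E} {T' : V →ₗ.[R] W}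
    (hT : IsRestrictionOf T V W T') (hTc : T.IsClosed) : T'.IsClosed := by
  have graph_eq : (T'.graph : Set (V × W)) =
      (fun p : V × W => ((p.1 : E), (p.2 : E))) ⁻¹' T.graph :=
    Set.ext fun _ => hT.mem_graph_iff
  rw [LinearPMap.IsClosed, graph_eq]
  exact hTc.preimage (by fun_prop)

theorem continuous_toFun_of_isClosed {𝕜 E F : Type*} [NontriviallyNormedField 𝕜]
    [NormedAddCommGroup E] [NormedSpace 𝕜 E] [NormedAddCommGroup F] [NormedSpace 𝕜 F]
    [CompleteSpace F] {f : E →ₗ.[𝕜] F} [CompleteSpace f.domain] (hf : f.IsClosed) :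
    Continuous f.toFun := by
  have graph_eq : (f.toFun.graph : Set (f.domain × F)) =
      (fun p : f.domain × F => ((p.1 : E), p.2)) ⁻¹' f.graph := by
    ext ⟨x, y⟩
    simp [eq_comm]
  refine f.toFun.continuous_of_isClosed_graph ?_
  rw [graph_eq]
  exact hf.preimage (by fun_prop)

end ClosedOperator

open scoped InnerProductSpace

section SymmetricOperator

variable {𝕜 E F G : Type*} [RCLike 𝕜] [NormedAddCommGroup E] [InnerProductSpace 𝕜 E]
  [NormedAddCommGroup F] [InnerProductSpace 𝕜 F] [NormedAddCommGroup G] [InnerProductSpace 𝕜 G]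

theorem isFormalAdjoint_iff_graph_le_adjoint {f : E →ₗ.[𝕜] F} {f' : F →ₗ.[𝕜] E} :
    f.IsFormalAdjoint f' ↔ f'.graph ≤ f.graph.adjoint := by
  constructor
  · rintro h ⟨y, x⟩ hyx
    obtain ⟨y, rfl, rfl⟩ := (LinearPMap.mem_graph_iff _).1 hyx
    rw [Submodule.mem_adjoint_iff]
    intro a b hab
    obtain ⟨a, rfl, rfl⟩ := (LinearPMap.mem_graph_iff _).1 hab
    exact sub_eq_zero.2 (h a y)
  · exact fun h x y => sub_eq_zero.1 <|
      (Submodule.mem_adjoint_iff _ _).1 (h (f'.mem_graph y)) _ _ (f.mem_graph x)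

theorem isFormalAdjoint_pmapComp {f : E →ₗ.[𝕜] F} {f' : F →ₗ.[𝕜] E} {g : F →ₗ.[𝕜] G}
    {g' : G →ₗ.[𝕜] F} (hf : f.IsFormalAdjoint f') (hg : g.IsFormalAdjoint g') :
    (pmapComp g f).IsFormalAdjoint (pmapComp f' g') := by
  rw [isFormalAdjoint_iff_graph_le_adjoint] at *
  rintro ⟨z, x⟩ hzx
  obtain ⟨y, hzy, hyx⟩ := mem_graph_pmapComp.1 hzx
  rw [Submodule.mem_adjoint_iff]
  intro a c hac
  obtain ⟨b, hab, hbc⟩ := mem_graph_pmapComp.1 hac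
  have hfab := (Submodule.mem_adjoint_iff _ _).1 (hf hyx) a b hab
  have hgbc := (Submodule.mem_adjoint_iff _ _).1 (hg hzy) b c hbc
  linear_combination hfab + hgbc

theorem isFormalAdjoint_add {f g : E →ₗ.[𝕜] F} {f' g' : F →ₗ.[𝕜] E}
    (hf : f.IsFormalAdjoint f') (hg : g.IsFormalAdjoint g') :
    (f + g).IsFormalAdjoint (f' + g') := by
  rintro ⟨x, hfx, hgx⟩ ⟨y, hfy, hgy⟩
  change ⟪f ⟨x, hfx⟩ + g ⟨x, hgx⟩, y⟫_𝕜 = ⟪x, f' ⟨y, hfy⟩ + g' ⟨y, hgy⟩⟫_𝕜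
  rw [inner_add_left, inner_add_right, hf _ ⟨y, hfy⟩, hg _ ⟨y, hgy⟩]

theorem eq_orthogonal_of_isOrtho_of_sup_eq_top {K L : Submodule 𝕜 E} (hKL : K ⟂ L)
    (hsup : K ⊔ L = ⊤) : K = Lᗮ := by
  refine le_antisymm hKL.le fun x hx => ?_
  obtain ⟨k, hk, l, hl, rfl⟩ := Submodule.mem_sup.1 (hsup ▸ Submodule.mem_top (x := x))
  have hl' : l ∈ Lᗮ := by simpa using sub_mem hx (hKL.le hk)
  have hl0 : l = 0 := by simpa using Submodule.inner_right_of_mem_orthogonal hl hl'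
  simpa [hl0] using hk

variable {Q : E →ₗ.[𝕜] E}

theorem range_isOrtho_pmapKernel_of_isFormalAdjoint (hQ : Q.IsFormalAdjoint Q) :
    LinearMap.range Q.toFun ⟂ pmapKernel Q := by
  rw [Submodule.isOrtho_iff_inner_eq]
  rintro _ ⟨v, rfl⟩ k hk
  have := (Submodule.mem_adjoint_iff _ _).1 (isFormalAdjoint_iff_graph_le_adjoint.1 hQ hk) v (Q v)
    (Q.mem_graph v)
  simpa using this

theorem range_eq_orthogonal_pmapKernel (hQ : Q.IsFormalAdjoint Q)
    (hsup : LinearMap.range Q.toFun ⊔ pmapKernel Q = ⊤) :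
    LinearMap.range Q.toFun = (pmapKernel Q)ᗮ :=
  eq_orthogonal_of_isOrtho_of_sup_eq_top (range_isOrtho_pmapKernel_of_isFormalAdjoint hQ) hsup

theorem pmapKernel_eq_orthogonal_range (hQ : Q.IsFormalAdjoint Q)
    (hsup : LinearMap.range Q.toFun ⊔ pmapKernel Q = ⊤) :
    pmapKernel Q = (LinearMap.range Q.toFun)ᗮ :=
  eq_orthogonal_of_isOrtho_of_sup_eq_top (range_isOrtho_pmapKernel_of_isFormalAdjoint hQ).symm
    (by rwa [sup_comm])

theorem graph_adjoint_eq_graph_of_range_sup_pmapKernel_eq_top (hQ : Q.IsFormalAdjoint Q)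
    (hsup : LinearMap.range Q.toFun ⊔ pmapKernel Q = ⊤) : Q.graph.adjoint = Q.graph := by
  refine le_antisymm ?_ (isFormalAdjoint_iff_graph_le_adjoint.1 hQ)
  rintro ⟨y, x⟩ hyx
  have hx : x ∈ LinearMap.range Q.toFun := by
    rw [range_eq_orthogonal_pmapKernel hQ hsup]
    intro k hk
    simpa using (Submodule.mem_adjoint_iff _ _).1 hyx k 0 hk
  obtain ⟨u, hux⟩ := mem_range_toFun_iff_exists_mem_graph.1 hx
  have hyu : y - u ∈ pmapKernel Q := by
    rw [pmapKernel_eq_orthogonal_range hQ hsup]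
    rintro _ ⟨v, rfl⟩
    have hdiff := sub_mem hyx (isFormalAdjoint_iff_graph_le_adjoint.1 hQ hux)
    simpa using (Submodule.mem_adjoint_iff _ _).1 hdiff v (Q v) (Q.mem_graph v)
  simpa using add_mem (mem_pmapKernel.1 hyu) hux

variable [CompleteSpace E]

theorem dense_domain_of_graph_adjoint_eq_graph (hQ : Q.graph.adjoint = Q.graph) :
    Dense (Q.domain : Set E) := by
  rw [Submodule.dense_iff_topologicalClosure_eq_top, Submodule.topologicalClosure_eq_top_iff,
    Submodule.eq_bot_iff]
  intro x hx
  have h0x : (0, x) ∈ Q.graph := by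
    rw [← hQ, Submodule.mem_adjoint_iff]
    intro a b hab
    simpa using hx a (LinearPMap.mem_domain_of_mem_graph hab)
  exact Q.graph_fst_eq_zero_snd h0x rfl

theorem isSelfAdjoint_of_range_sup_pmapKernel_eq_top (hQ : Q.IsFormalAdjoint Q)
    (hsup : LinearMap.range Q.toFun ⊔ pmapKernel Q = ⊤) : IsSelfAdjoint Q := by
  have hgraph := graph_adjoint_eq_graph_of_range_sup_pmapKernel_eq_top hQ hsup
  rw [LinearPMap.isSelfAdjoint_def]
  refine LinearPMap.eq_of_eq_graph ?_
  rw [LinearPMap.adjoint_graph_eq_graph_adjoint (dense_domain_of_graph_adjoint_eq_graph hgraph),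
    hgraph]

end SymmetricOperator

section ReducedInverse

variable {𝕜 E F : Type*} [RCLike 𝕜] [NormedAddCommGroup E] [InnerProductSpace 𝕜 E]
  [NormedAddCommGroup F] [InnerProductSpace 𝕜 F]

/-- The inverse of the restriction of `B` to the orthogonal complement of its kernel, that is, the
Moore–Penrose inverse of `B` with domain `ran B`. -/
noncomputable def reducedInverse (B : E →ₗ.[𝕜] F) : F →ₗ.[𝕜] E :=
  (B.domRestrict (pmapKernel B)ᗮ).inverse

theorem ker_domRestrict_orthogonal_pmapKernel (B : E →ₗ.[𝕜] F) :
    LinearMap.ker (B.domRestrict (pmapKernel B)ᗮ).toFun = ⊥ := by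
  refine LinearMap.ker_eq_bot'.2 fun x hx => Subtype.ext ?_
  have hgraph : ((x : E), (0 : F)) ∈ (B.domRestrict (pmapKernel B)ᗮ).graph :=
    hx ▸ LinearPMap.mem_graph _ x
  obtain ⟨hker, horth⟩ := mem_graph_domRestrict.1 hgraph
  simpa using Submodule.inner_right_of_mem_orthogonal (mem_pmapKernel.2 hker) horth

theorem mem_graph_reducedInverse {B : E →ₗ.[𝕜] F} {x : E} {y : F} :
    (y, x) ∈ (reducedInverse B).graph ↔ (x, y) ∈ B.graph ∧ x ∈ (pmapKernel B)ᗮ := by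
  rw [reducedInverse, LinearPMap.inverse_graph (ker_domRestrict_orthogonal_pmapKernel B),
    ← mem_graph_domRestrict]
  simp [-LinearPMap.mem_graph_iff]

theorem isClosed_reducedInverse {B : E →ₗ.[𝕜] F} (hB : B.IsClosed) :
    (reducedInverse B).IsClosed := by
  have graph_eq : ((reducedInverse B).graph : Set (F × E)) =
      Prod.swap ⁻¹' B.graph ∩ Prod.snd ⁻¹' (pmapKernel B)ᗮ :=
    Set.ext fun _ => mem_graph_reducedInverse
  rw [LinearPMap.IsClosed, graph_eq]
  exact (hB.preimage continuous_swap).inter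
    ((Submodule.isClosed_orthogonal _).preimage continuous_snd)

variable [CompleteSpace E]

theorem domain_reducedInverse {B : E →ₗ.[𝕜] F} (hB : B.IsClosed) :
    (reducedInverse B).domain = LinearMap.range B.toFun := by
  have : CompleteSpace (pmapKernel B) := (isClosed_pmapKernel hB).completeSpace_coe
  ext y
  rw [LinearPMap.mem_domain_iff, mem_range_toFun_iff_exists_mem_graph]
  constructor
  · rintro ⟨x, hyx⟩
    exact ⟨x, (mem_graph_reducedInverse.1 hyx).1⟩
  · rintro ⟨x, hxy⟩
    obtain ⟨n, hn, x', hx', rfl⟩ := (pmapKernel B).exists_add_mem_mem_orthogonal x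
    exact ⟨x', mem_graph_reducedInverse.2 ⟨by simpa using sub_mem hxy (mem_pmapKernel.1 hn), hx'⟩⟩

end ReducedInverse

section HilbertComplex

variable {𝕜 E F G : Type*} [RCLike 𝕜] [NormedAddCommGroup E] [InnerProductSpace 𝕜 E]
  [NormedAddCommGroup F] [InnerProductSpace 𝕜 F] [NormedAddCommGroup G] [InnerProductSpace 𝕜 G]
  [CompleteSpace E]

theorem orthogonal_range_le_pmapKernel_adjoint {A : E →ₗ.[𝕜] F}
    (hA : Dense (A.domain : Set E)) : (LinearMap.range A.toFun)ᗮ ≤ pmapKernel A† := by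
  intro y hy
  rw [mem_pmapKernel, LinearPMap.adjoint_graph_eq_graph_adjoint hA, Submodule.mem_adjoint_iff]
  intro a b hab
  simpa using hy b (mem_range_toFun_iff_exists_mem_graph.2 ⟨a, hab⟩)

variable [CompleteSpace F]

theorem exists_mem_graph_adjoint_pmapComp_self {B : E →ₗ.[𝕜] F} (hBd : Dense (B.domain : Set E))
    (hBc : B.IsClosed) (hBr : IsClosed (LinearMap.range B.toFun : Set F)) {c : E}
    (hc : c ∈ (pmapKernel B)ᗮ) :
    ∃ d ∈ (pmapKernel B)ᗮ, (d, c) ∈ (pmapComp B† B).graph := by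
  have : CompleteSpace (reducedInverse B).domain := by
    rw [domain_reducedInverse hBc]
    exact hBr.completeSpace_coe
  let L : (reducedInverse B).domain →L[𝕜] E :=
    ⟨(reducedInverse B).toFun, continuous_toFun_of_isClosed (isClosed_reducedInverse hBc)⟩
  have hL (y) : (L y, (y : F)) ∈ B.graph ∧ L y ∈ (pmapKernel B)ᗮ :=
    mem_graph_reducedInverse.1 ((reducedInverse B).mem_graph y)
  -- `L L*` inverts `B†B` on `(ker B)ᗮ`
  let y := L.adjoint c
  refine ⟨L y, (hL y).2, mem_graph_pmapComp.2 ⟨y, (hL y).1, ?_⟩⟩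
  rw [LinearPMap.adjoint_graph_eq_graph_adjoint hBd, Submodule.mem_adjoint_iff]
  intro a b hab
  have hb : b ∈ (reducedInverse B).domain := by
    rw [domain_reducedInverse hBc]
    exact mem_range_toFun_iff_exists_mem_graph.2 ⟨a, hab⟩
  have hLb : ⟪L ⟨b, hb⟩ - a, c⟫_𝕜 = 0 := hc _ (sub_mem_pmapKernel (hL ⟨b, hb⟩).1 hab)
  calc ⟪b, (y : F)⟫_𝕜 - ⟪a, c⟫_𝕜 = ⟪L ⟨b, hb⟩, c⟫_𝕜 - ⟪a, c⟫_𝕜 := by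
        rw [← ContinuousLinearMap.adjoint_inner_right, Submodule.coe_inner]
    _ = 0 := by rw [← inner_sub_left, hLb]

theorem exists_mem_graph_pmapComp_self_adjoint {A : E →ₗ.[𝕜] F} (hAd : Dense (A.domain : Set E))
    (hAc : A.IsClosed) (hAr : IsClosed (LinearMap.range A.toFun : Set F)) {b : F}
    (hb : b ∈ LinearMap.range A.toFun) :
    ∃ d ∈ LinearMap.range A.toFun, (d, b) ∈ (pmapComp A A†).graph := by
  rw [← domain_reducedInverse hAc, LinearPMap.mem_domain_iff] at hb
  obtain ⟨a, hba⟩ := hb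
  obtain ⟨hab, ha⟩ := mem_graph_reducedInverse.1 hba
  obtain ⟨e, -, hea⟩ := exists_mem_graph_adjoint_pmapComp_self hAd hAc hAr ha
  obtain ⟨d, hed, hda⟩ := mem_graph_pmapComp.1 hea
  exact ⟨d, mem_range_toFun_iff_exists_mem_graph.2 ⟨e, hed⟩, mem_graph_pmapComp.2 ⟨a, hda, hab⟩⟩

/-- The Laplacian `B†B + AA†` in the middle degree of a complex `E → F → G` of unbounded operators
`A`, `B`, on its natural domain. -/
noncomputable def hodgeLaplacian (A : E →ₗ.[𝕜] F) (B : F →ₗ.[𝕜] G) : F →ₗ.[𝕜] F :=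
  pmapComp B† B + pmapComp A A†

variable {A : E →ₗ.[𝕜] F} {B : F →ₗ.[𝕜] G}

theorem isFormalAdjoint_hodgeLaplacian_self (hAd : Dense (A.domain : Set E))
    (hBd : Dense (B.domain : Set F)) :
    (hodgeLaplacian A B).IsFormalAdjoint (hodgeLaplacian A B) :=
  have hA := LinearPMap.adjoint_isFormalAdjoint hAd
  have hB := LinearPMap.adjoint_isFormalAdjoint hBd
  isFormalAdjoint_add (isFormalAdjoint_pmapComp hB.symm hB) (isFormalAdjoint_pmapComp hA hA.symm)

theorem range_le_range_hodgeLaplacian (hAd : Dense (A.domain : Set E)) (hAc : A.IsClosed)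
    (hAr : IsClosed (LinearMap.range A.toFun : Set F))
    (hAB : LinearMap.range A.toFun ≤ pmapKernel B) :
    LinearMap.range A.toFun ≤ LinearMap.range (hodgeLaplacian A B).toFun := by
  intro b hb
  obtain ⟨d, hd, hdb⟩ := exists_mem_graph_pmapComp_self_adjoint hAd hAc hAr hb
  have hd0 : (d, 0) ∈ (pmapComp B† B).graph := mem_graph_pmapComp.2 ⟨0, hAB hd, zero_mem _⟩
  exact mem_range_toFun_iff_exists_mem_graph.2
    ⟨d, mem_graph_add.2 ⟨0, b, hd0, hdb, zero_add b⟩⟩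

theorem orthogonal_pmapKernel_le_range_hodgeLaplacian [CompleteSpace G]
    (hAd : Dense (A.domain : Set E)) (hBd : Dense (B.domain : Set F)) (hBc : B.IsClosed)
    (hBr : IsClosed (LinearMap.range B.toFun : Set G))
    (hAB : LinearMap.range A.toFun ≤ pmapKernel B) :
    (pmapKernel B)ᗮ ≤ LinearMap.range (hodgeLaplacian A B).toFun := by
  intro c hc
  obtain ⟨d, hd, hdc⟩ := exists_mem_graph_adjoint_pmapComp_self hBd hBc hBr hc
  have hdA : d ∈ pmapKernel A† :=
    orthogonal_range_le_pmapKernel_adjoint hAd (Submodule.orthogonal_le hAB hd)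
  have hd0 : (d, 0) ∈ (pmapComp A A†).graph := mem_graph_pmapComp.2 ⟨0, hdA, zero_mem _⟩
  exact mem_range_toFun_iff_exists_mem_graph.2
    ⟨d, mem_graph_add.2 ⟨c, 0, hdc, hd0, add_zero c⟩⟩

theorem orthogonal_range_inf_pmapKernel_le_pmapKernel_hodgeLaplacian
    (hAd : Dense (A.domain : Set E)) :
    (LinearMap.range A.toFun)ᗮ ⊓ pmapKernel B ≤ pmapKernel (hodgeLaplacian A B) := by
  rintro x ⟨hxA, hxB⟩
  have hxA' := orthogonal_range_le_pmapKernel_adjoint hAd hxA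
  exact mem_graph_add.2 ⟨0, 0, mem_graph_pmapComp.2 ⟨0, hxB, zero_mem _⟩,
    mem_graph_pmapComp.2 ⟨0, hxA', zero_mem _⟩, add_zero 0⟩

variable [CompleteSpace G]

theorem range_sup_pmapKernel_hodgeLaplacian_eq_top (hAd : Dense (A.domain : Set E))
    (hAc : A.IsClosed) (hAr : IsClosed (LinearMap.range A.toFun : Set F))
    (hBd : Dense (B.domain : Set F)) (hBc : B.IsClosed)
    (hBr : IsClosed (LinearMap.range B.toFun : Set G))
    (hAB : LinearMap.range A.toFun ≤ pmapKernel B) :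
    LinearMap.range (hodgeLaplacian A B).toFun ⊔ pmapKernel (hodgeLaplacian A B) = ⊤ := by
  have : CompleteSpace (LinearMap.range A.toFun) := hAr.completeSpace_coe
  have : CompleteSpace (pmapKernel B) := (isClosed_pmapKernel hBc).completeSpace_coe
  refine top_unique ?_
  calc ⊤ = pmapKernel B ⊔ (pmapKernel B)ᗮ :=
        Submodule.sup_orthogonal_of_hasOrthogonalProjection.symm
    _ = LinearMap.range A.toFun ⊔ (LinearMap.range A.toFun)ᗮ ⊓ pmapKernel B ⊔ (pmapKernel B)ᗮ := by
        rw [Submodule.sup_orthogonal_inf_of_hasOrthogonalProjection hAB]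
    _ ≤ _ := sup_le
        (sup_le_sup (range_le_range_hodgeLaplacian hAd hAc hAr hAB)
          (orthogonal_range_inf_pmapKernel_le_pmapKernel_hodgeLaplacian hAd))
        (le_sup_of_le_left (orthogonal_pmapKernel_le_range_hodgeLaplacian hAd hBd hBc hBr hAB))

theorem isSelfAdjoint_hodgeLaplacian (hAd : Dense (A.domain : Set E))
    (hAc : A.IsClosed) (hAr : IsClosed (LinearMap.range A.toFun : Set F))
    (hBd : Dense (B.domain : Set F)) (hBc : B.IsClosed)
    (hBr : IsClosed (LinearMap.range B.toFun : Set G))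
    (hAB : LinearMap.range A.toFun ≤ pmapKernel B) : IsSelfAdjoint (hodgeLaplacian A B) :=
  isSelfAdjoint_of_range_sup_pmapKernel_eq_top (isFormalAdjoint_hodgeLaplacian_self hAd hBd)
    (range_sup_pmapKernel_hodgeLaplacian_eq_top hAd hAc hAr hBd hBc hBr hAB)

theorem isClosed_range_hodgeLaplacian (hAd : Dense (A.domain : Set E))
    (hAc : A.IsClosed) (hAr : IsClosed (LinearMap.range A.toFun : Set F))
    (hBd : Dense (B.domain : Set F)) (hBc : B.IsClosed)
    (hBr : IsClosed (LinearMap.range B.toFun : Set G))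
    (hAB : LinearMap.range A.toFun ≤ pmapKernel B) :
    IsClosed (LinearMap.range (hodgeLaplacian A B).toFun : Set F) := by
  rw [range_eq_orthogonal_pmapKernel (isFormalAdjoint_hodgeLaplacian_self hAd hBd)
    (range_sup_pmapKernel_hodgeLaplacian_eq_top hAd hAc hAr hBd hBc hBr hAB)]
  exact Submodule.isClosed_orthogonal _

end HilbertComplex

/-- `S` plays the role of `T†`. -/
theorem stmt_5_general {𝕜 H : Type*} [RCLike 𝕜] [NormedAddCommGroup H] [InnerProductSpace 𝕜 H]
    (T : H →ₗ.[𝕜] H) (hTc : T.IsClosed) (hT2 : LinearMap.range T.toFun ≤ pmapKernel T)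
    (S : H →ₗ.[𝕜] H) (V₁ V₂ V₃ : Submodule 𝕜 H)
    [CompleteSpace V₁] [CompleteSpace V₂] [CompleteSpace V₃]
    (T₁ : V₁ →ₗ.[𝕜] V₂) (hT₁ : IsRestrictionOf T V₁ V₂ T₁) (hT₁d : Dense (T₁.domain : Set V₁))
    (T₂ : V₂ →ₗ.[𝕜] V₃) (hT₂ : IsRestrictionOf T V₂ V₃ T₂) (hT₂d : Dense (T₂.domain : Set V₂))
    (hR₁ : IsClosed (LinearMap.range T₁.toFun : Set V₂))
    (hR₂ : IsClosed (LinearMap.range T₂.toFun : Set V₃))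
    (hS₂ : IsRestrictionOf S V₂ V₁ T₁†) (hS₃ : IsRestrictionOf S V₃ V₂ T₂†)
    (Q : V₂ →ₗ.[𝕜] V₂) (hQ : IsRestrictionOf (pmapComp S T + pmapComp T S) V₂ V₂ Q) :
    Dense (Q.domain : Set V₂) ∧ Q.IsClosed ∧ IsSelfAdjoint Q ∧
      IsClosed (LinearMap.range Q.toFun : Set V₂) := by
  obtain rfl : Q = hodgeLaplacian T₁ T₂ :=
    hQ.unique ((hS₃.pmapComp hT₂).add (hT₁.pmapComp hS₂))
  have hc₁ := hT₁.isClosed hTc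
  have hc₂ := hT₂.isClosed hTc
  have h12 := hT₂.range_le_pmapKernel hT₁ hT2
  have hsa := isSelfAdjoint_hodgeLaplacian hT₁d hc₁ hR₁ hT₂d hc₂ hR₂ h12
  exact ⟨hsa.dense_domain, hsa.isClosed, hsa,
    isClosed_range_hodgeLaplacian hT₁d hc₁ hR₁ hT₂d hc₂ hR₂ h12⟩

theorem stmt_5 {H : Type*} [NormedAddCommGroup H] [InnerProductSpace ℂ H] [CompleteSpace H]
    -- `T` is closed and densely defined, with range contained in `Dom T` and `T² = 0`
    (T : H →ₗ.[ℂ] H) (hTd : Dense (T.domain : Set H)) (hTc : T.IsClosed)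
    (hTr : ∀ u : T.domain, T u ∈ T.domain)
    (hT2 : ∀ u : T.domain, T ⟨T u, hTr u⟩ = 0)
    -- `P = T*T + TT*` with its natural domain; `P` is self-adjoint
    (P : H →ₗ.[ℂ] H)
    (hPdom : ∀ x : H, x ∈ P.domain ↔
      ∃ (h1 : x ∈ T.domain) (h2 : x ∈ (T†).domain),
        T ⟨x, h1⟩ ∈ (T†).domain ∧ T† ⟨x, h2⟩ ∈ T.domain)
    (hPval : ∀ (x : H) (hx : x ∈ P.domain) (h1 : x ∈ T.domain) (h2 : x ∈ (T†).domain)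
      (h3 : T ⟨x, h1⟩ ∈ (T†).domain) (h4 : T† ⟨x, h2⟩ ∈ T.domain),
      P ⟨x, hx⟩ = T† ⟨T ⟨x, h1⟩, h3⟩ + T ⟨T† ⟨x, h2⟩, h4⟩)
    (hPsa : IsSelfAdjoint P)
    -- the closed subspaces `V₁, V₂, V₃`
    (V₁ V₂ V₃ : Submodule ℂ H)
    (hV₁ : IsClosed (V₁ : Set H)) (hV₂ : IsClosed (V₂ : Set H)) (hV₃ : IsClosed (V₃ : Set H))
    [CompleteSpace V₁] [CompleteSpace V₂] [CompleteSpace V₃]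
    -- `T₁ = T|_{V₁} : V₁ ⇀ V₂` and `T₂ = T|_{V₂} : V₂ ⇀ V₃`, densely defined with closed range
    (T₁ : ↥V₁ →ₗ.[ℂ] ↥V₂) (hT₁ : IsRestrictionOf T V₁ V₂ T₁)
    (hT₁d : Dense (T₁.domain : Set V₁))
    (T₂ : ↥V₂ →ₗ.[ℂ] ↥V₃) (hT₂ : IsRestrictionOf T V₂ V₃ T₂)
    (hT₂d : Dense (T₂.domain : Set V₂))
    (hR₁ : IsClosed ((LinearMap.range T₁.toFun : Submodule ℂ V₂) : Set V₂))
    (hR₂ : IsClosed ((LinearMap.range T₂.toFun : Submodule ℂ V₃) : Set V₃))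
    -- `S₂ = T*|_{V₂} : V₂ ⇀ V₁` and `S₃ = T*|_{V₃} : V₃ ⇀ V₂`; the adjoint of `T|_{V₁}` is
    -- `T*|_{V₂}` and the adjoint of `T|_{V₂}` is `T*|_{V₃}`
    (S₂ : ↥V₂ →ₗ.[ℂ] ↥V₁) (hS₂ : IsRestrictionOf (T†) V₂ V₁ S₂)
    (S₃ : ↥V₃ →ₗ.[ℂ] ↥V₂) (hS₃ : IsRestrictionOf (T†) V₃ V₂ S₃)
    (hadj₁ : T₁† = S₂) (hadj₂ : T₂† = S₃)
    -- `Q = P|_{V₂}`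
    (Q : ↥V₂ →ₗ.[ℂ] ↥V₂) (hQ : IsRestrictionOf P V₂ V₂ Q)
    :
    -- `Q` is densely defined, closed, self-adjoint, and has closed range
    Dense (Q.domain : Set V₂) ∧ Q.IsClosed ∧ IsSelfAdjoint Q ∧
    IsClosed ((LinearMap.range Q.toFun : Submodule ℂ V₂) : Set V₂) := by
  subst hadj₁ hadj₂
  obtain rfl := eq_pmapComp_add_pmapComp hPdom hPval
  have range_le_ker : LinearMap.range T.toFun ≤ pmapKernel T := by
    rintro _ ⟨u, rfl⟩
    exact (LinearPMap.mem_graph_iff _).2 ⟨⟨T u, hTr u⟩, rfl, hT2 u⟩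
  exact stmt_5_general T hTc range_le_ker T† V₁ V₂ V₃ T₁ hT₁ hT₁d T₂ hT₂ hT₂d hR₁ hR₂ hS₂ hS₃ Q hQ
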